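/- Let n ≥ 2, 1 < p ≤ 2, and 𝕂 = ℝ or ℂ. Then every continuous n-linear form A : ℓ_1 × ⋯ × ℓ_1 × ℓ_p → 𝕂 (with n−1 factors equal to ℓ_1) is absolutely (r;r,…,r)-summing for every 1 ≤ r ≤ 2^{n−1}/(2^{n−1}−1). -/

import Mathlib

open scoped BigOperators NNReal ENNReal

/-- The weak `ℓ_r` norm of a finite family `(x_j)` in a normed space:
`sup_{‖φ‖ ≤ 1} (∑_j ‖φ(x_j)‖^r)^(1/r)`. -/
noncomputable def weakNorm (𝕜 : Type*) [RCLike 𝕜] {E : Type*} [NormedAddCommGroup E]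
    [NormedSpace 𝕜 E] (r : ℝ) {m : ℕ} (x : Fin m → E) : ℝ :=
  ⨆ φ : {φ : E →L[𝕜] 𝕜 // ‖φ‖ ≤ 1}, (∑ j, ‖φ.1 (x j)‖ ^ r) ^ (1 / r)

/-- The exponent family for `ℓ₁ × ⋯ × ℓ₁ × ℓ_p` (`n − 1` factors `ℓ₁`, last factor `ℓ_p`). -/
noncomputable def pexp (n : ℕ) (p : ℝ) (i : Fin n) : ℝ≥0∞ :=
  if i.val + 1 < n then 1 else ENNReal.ofReal p

/-!
Call `E` a GT space if every operator from `E` into a Hilbert space is absolutely `1`-summing.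
Every form on `E₁ × ⋯ × Eₙ × F` with GT spaces `Eᵢ` and an arbitrary normed space `F` is
`(r; r, …, r)`-summing for `1 ≤ r ≤ 2`, by induction on `n`. By the induction hypothesis applied
to the forms `A(z, ·)`, the operator `T z = (A(z, x_j))_j` is bounded from `E₁` into `ℓ_r^m`,
hence into `ℓ_2^m`; as a Hilbert-space-valued operator on `E₁` it is `1`-summing, hence
`r`-summing, and `|A(z_j, x_j)| ≤ ‖T z_j‖`.

That `ℓ₁` is a GT space is Grothendieck's theorem. For `T : ℓ₁ → ℓ_2^κ` with `‖T‖ ≤ 1`, let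
`G_ω = ∑ ω_k T_k` be the random signed sums of its coordinates. By Khinchine's inequality
`‖T z‖ ≤ 2 𝔼 |G_ω z|`, and the bound on the fourth moments of the numbers `G_ω e_k` shows that
truncating the coefficients of `G_ω ∈ ℓ_∞` at height `8` gives functionals `ψ_ω` such that
`z ↦ ((G_ω - ψ_ω) z)_ω` is an operator into `L²` of norm at most `1 / 4`. The `ψ_ω` are controlled
by the weak norm, the remainder is an operator of the same kind as `T`, and iterating yields a
geometric series.
-/

section WeakNorm

variable {𝕜 : Type*} [RCLike 𝕜] {E : Type*} [NormedAddCommGroup E] [NormedSpace 𝕜 E]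
  {m : ℕ} {r : ℝ}

lemma weakNorm_nonneg (r : ℝ) (x : Fin m → E) : 0 ≤ weakNorm 𝕜 r x :=
  Real.iSup_nonneg fun _ => by positivity

lemma weakNorm_le {x : Fin m → E} {M : ℝ}
    (h : ∀ φ : E →L[𝕜] 𝕜, ‖φ‖ ≤ 1 → (∑ j, ‖φ (x j)‖ ^ r) ^ (1 / r) ≤ M) :
    weakNorm 𝕜 r x ≤ M :=
  haveI : Nonempty {φ : E →L[𝕜] 𝕜 // ‖φ‖ ≤ 1} := ⟨0, by simp⟩
  ciSup_le fun φ => h φ.1 φ.2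

lemma le_weakNorm (hr : 0 < r) (x : Fin m → E) {φ : E →L[𝕜] 𝕜} (hφ : ‖φ‖ ≤ 1) :
    (∑ j, ‖φ (x j)‖ ^ r) ^ (1 / r) ≤ weakNorm 𝕜 r x := by
  refine le_ciSup (f := fun φ : {φ : E →L[𝕜] 𝕜 // ‖φ‖ ≤ 1} =>
    (∑ j, ‖φ.1 (x j)‖ ^ r) ^ (1 / r)) ⟨(∑ j, ‖x j‖ ^ r) ^ (1 / r), ?_⟩ ⟨φ, hφ⟩
  rintro _ ⟨ψ, rfl⟩
  dsimp only
  gcongr with j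
  exact (ψ.1.le_of_opNorm_le ψ.2 _).trans_eq (one_mul _)

lemma rpow_sum_norm_smul {ι : Type*} [Fintype ι] (hr : 0 < r) (c : 𝕜) (y : ι → E) :
    (∑ j, ‖c • y j‖ ^ r) ^ (1 / r) = ‖c‖ * (∑ j, ‖y j‖ ^ r) ^ (1 / r) := by
  simp only [norm_smul, Real.mul_rpow (norm_nonneg _) (norm_nonneg _), ← Finset.mul_sum]
  rw [Real.mul_rpow (by positivity) (by positivity), one_div, Real.rpow_rpow_inv (by positivity)
    hr.ne']

lemma rpow_sum_norm_apply_le_weakNorm (hr : 0 < r) (φ : E →L[𝕜] 𝕜) (x : Fin m → E) :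
    (∑ j, ‖φ (x j)‖ ^ r) ^ (1 / r) ≤ ‖φ‖ * weakNorm 𝕜 r x := by
  rcases eq_or_ne φ 0 with rfl | hφ
  · simp [hr.ne']
  have hφ' : ‖φ‖ ≠ 0 := norm_ne_zero_iff.mpr hφ
  let ψ : E →L[𝕜] 𝕜 := ((‖φ‖⁻¹ : ℝ) : 𝕜) • φ
  have hψ : ‖ψ‖ ≤ 1 := by simp [ψ, norm_smul, hφ']
  have hφψ (j : Fin m) : φ (x j) = ((‖φ‖ : ℝ) : 𝕜) • ψ (x j) := by
    simp [ψ, hφ']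
  simp only [hφψ]
  rw [rpow_sum_norm_smul hr, RCLike.norm_ofReal, abs_norm]
  gcongr
  exact le_weakNorm hr x hψ

lemma sum_norm_apply_le_weakNorm (φ : E →L[𝕜] 𝕜) (x : Fin m → E) :
    ∑ j, ‖φ (x j)‖ ≤ ‖φ‖ * weakNorm 𝕜 1 x := by
  simpa using rpow_sum_norm_apply_le_weakNorm one_pos φ x

lemma weakNorm_one_smul_le {q : ℝ} (hrq : r.HolderConjugate q) (x : Fin m → E) {g : Fin m → ℝ≥0}
    (hg : ∑ j, g j ^ q ≤ 1) :
    weakNorm 𝕜 1 (fun j => ((g j : ℝ) : 𝕜) • x j) ≤ weakNorm 𝕜 r x := by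
  refine weakNorm_le fun φ hφ => ?_
  have hg' : (∑ j, (g j : ℝ) ^ q) ^ (1 / q) ≤ 1 :=
    Real.rpow_le_one (by positivity) (mod_cast hg) (by simpa using hrq.symm.nonneg)
  calc (∑ j, ‖φ (((g j : ℝ) : 𝕜) • x j)‖ ^ (1 : ℝ)) ^ (1 / (1 : ℝ))
      = ∑ j, ‖φ (x j)‖ * g j := by simp [mul_comm]
    _ ≤ (∑ j, ‖φ (x j)‖ ^ r) ^ (1 / r) * (∑ j, (g j : ℝ) ^ q) ^ (1 / q) :=
        Real.inner_le_Lp_mul_Lq_of_nonneg _ hrq (fun _ _ => norm_nonneg _) fun _ _ => (g _).2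
    _ ≤ weakNorm 𝕜 r x * 1 := by
        gcongr
        · exact weakNorm_nonneg r x
        · exact le_weakNorm hrq.pos x hφ
    _ = weakNorm 𝕜 r x := mul_one _

theorem rpow_sum_norm_apply_le_of_one_summing {F : Type*} [NormedAddCommGroup F]
    [NormedSpace 𝕜 F] (T : E →L[𝕜] F) {C : ℝ} (hC : 0 ≤ C)
    (hT : ∀ x : Fin m → E, ∑ j, ‖T (x j)‖ ≤ C * weakNorm 𝕜 1 x) (hr : 1 ≤ r) (x : Fin m → E) :
    (∑ j, ‖T (x j)‖ ^ r) ^ (1 / r) ≤ C * weakNorm 𝕜 r x := by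
  rcases hr.eq_or_lt with rfl | hr
  · simpa using hT x
  obtain ⟨g, hg, hgx⟩ := (NNReal.isGreatest_Lp Finset.univ (fun j => ‖T (x j)‖₊)
    (Real.HolderConjugate.conjExponent hr)).1
  calc (∑ j, ‖T (x j)‖ ^ r) ^ (1 / r)
      = ∑ j, ‖T (x j)‖ * g j := by simpa using (congrArg NNReal.toReal hgx).symm
    _ = ∑ j, ‖T (((g j : ℝ) : 𝕜) • x j)‖ := by simp [norm_smul, mul_comm]
    _ ≤ C * weakNorm 𝕜 1 (fun j => ((g j : ℝ) : 𝕜) • x j) := hT _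
    _ ≤ C * weakNorm 𝕜 r x := by
        gcongr
        exact weakNorm_one_smul_le (.conjExponent hr) x hg

end WeakNorm

lemma rpow_sum_le_rpow_sum_of_exponent_le {ι : Type*} (s : Finset ι) {t : ι → ℝ}
    (ht : ∀ i ∈ s, 0 ≤ t i) {p q : ℝ} (hp : 0 < p) (hpq : p ≤ q) :
    (∑ i ∈ s, t i ^ q) ^ (1 / q) ≤ (∑ i ∈ s, t i ^ p) ^ (1 / p) := by
  have hq : 0 < q := hp.trans_le hpq
  have hpow (i) (hi : i ∈ s) : (t i ^ q) ^ (p / q) = t i ^ p := by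
    rw [← Real.rpow_mul (ht i hi), mul_div_cancel₀ _ hq.ne']
  have hsub : (∑ i ∈ s, t i ^ q) ^ (p / q) ≤ ∑ i ∈ s, t i ^ p := by
    rw [← Finset.sum_congr rfl hpow]
    exact Finset.le_sum_of_subadditive_on_pred (· ^ (p / q)) (0 ≤ ·)
      (Real.zero_rpow (by positivity)).le (fun _ _ ha hb =>
        Real.rpow_add_le_add_rpow ha hb (by positivity) ((div_le_one hq).2 hpq))
      (fun _ _ => add_nonneg) _ fun i hi => Real.rpow_nonneg (ht i hi) q
  have hsum : 0 ≤ ∑ i ∈ s, t i ^ q := Finset.sum_nonneg fun i hi => Real.rpow_nonneg (ht i hi) q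
  calc (∑ i ∈ s, t i ^ q) ^ (1 / q) = ((∑ i ∈ s, t i ^ q) ^ (p / q)) ^ (1 / p) := by
        rw [← Real.rpow_mul hsum]
        congr 1
        field_simp
    _ ≤ (∑ i ∈ s, t i ^ p) ^ (1 / p) := by gcongr

section Rademacher

variable {H : Type*} [NormedAddCommGroup H]

lemma norm_intUnits_smul (ε : ℤˣ) (v : H) : ‖ε • v‖ = ‖v‖ := by
  rcases Int.units_eq_one_or ε with rfl | rfl <;> simp

variable {κ : Type*} [Fintype κ] [DecidableEq κ]

-- Average with the copy of the signs in which the sign at `i` is flipped.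
lemma expect_sum_insert_intUnits_smul (F : H → ℝ) (a : κ → H) {s : Finset κ} {i : κ}
    (hi : i ∉ s) :
    𝔼 ω : κ → ℤˣ, F (∑ k ∈ insert i s, ω k • a k) =
      𝔼 ω : κ → ℤˣ, (F (∑ k ∈ s, ω k • a k + ω i • a i) +
        F (∑ k ∈ s, ω k • a k - ω i • a i)) / 2 := by
  have hflip : 𝔼 ω : κ → ℤˣ, F (∑ k ∈ s, ω k • a k + ω i • a i) =
      𝔼 ω : κ → ℤˣ, F (∑ k ∈ s, ω k • a k - ω i • a i) := by
    refine Fintype.expect_equiv (Equiv.mulLeft (Pi.mulSingle i (-1))) _ _ fun ω => ?_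
    have hs : ∑ k ∈ s, (Pi.mulSingle (M := fun _ => ℤˣ) i (-1) * ω) k • a k =
        ∑ k ∈ s, ω k • a k := Finset.sum_congr rfl fun k hk => by
      rw [Pi.mul_apply, Pi.mulSingle_eq_of_ne (ne_of_mem_of_not_mem hk hi), one_mul]
    simp only [Equiv.coe_mulLeft]
    rw [hs, Pi.mul_apply, Pi.mulSingle_eq_same, neg_one_mul,
      Units.neg_smul, sub_neg_eq_add]
  simp only [Finset.sum_insert hi, add_comm (_ • a i), ← Finset.expect_div,
    Finset.expect_add_distrib, ← hflip]
  ring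

variable [InnerProductSpace ℝ H]

lemma expect_norm_sum_sq (a : κ → H) (s : Finset κ) :
    𝔼 ω : κ → ℤˣ, ‖∑ k ∈ s, ω k • a k‖ ^ 2 = ∑ k ∈ s, ‖a k‖ ^ 2 := by
  induction s using Finset.induction_on with
  | empty => simp
  | insert i s hi ih =>
    have hpar (x y : H) : (‖x + y‖ ^ 2 + ‖x - y‖ ^ 2) / 2 = ‖x‖ ^ 2 + ‖y‖ ^ 2 := by
      linarith [parallelogram_law_with_norm ℝ x y]
    rw [expect_sum_insert_intUnits_smul (‖·‖ ^ 2) a hi, Finset.sum_insert hi, add_comm, ← ih]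
    simp only [hpar, norm_intUnits_smul, Finset.expect_add_distrib, Fintype.expect_const]

lemma norm_add_pow_four_add_norm_sub_pow_four_le (x y : H) :
    ‖x + y‖ ^ 4 + ‖x - y‖ ^ 4 ≤ 2 * (‖x‖ ^ 4 + 6 * ‖x‖ ^ 2 * ‖y‖ ^ 2 + ‖y‖ ^ 4) := by
  have hpar := parallelogram_law_with_norm ℝ x y
  have hdiff : ‖x + y‖ ^ 2 - ‖x - y‖ ^ 2 = 4 * inner ℝ x y := by
    rw [norm_add_sq_real, norm_sub_sq_real]
    ring
  have hinner : inner ℝ x y ^ 2 ≤ (‖x‖ * ‖y‖) ^ 2 :=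
    sq_le_sq' (neg_le_of_abs_le (abs_real_inner_le_norm x y)) (real_inner_le_norm x y)
  calc ‖x + y‖ ^ 4 + ‖x - y‖ ^ 4
      = ((‖x + y‖ ^ 2 + ‖x - y‖ ^ 2) ^ 2 + (‖x + y‖ ^ 2 - ‖x - y‖ ^ 2) ^ 2) / 2 := by ring
    _ = 2 * (‖x‖ ^ 2 + ‖y‖ ^ 2) ^ 2 + 8 * inner ℝ x y ^ 2 := by
      rw [hdiff, show ‖x + y‖ ^ 2 + ‖x - y‖ ^ 2 = 2 * (‖x‖ ^ 2 + ‖y‖ ^ 2) by linarith]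
      ring
    _ ≤ 2 * (‖x‖ ^ 4 + 6 * ‖x‖ ^ 2 * ‖y‖ ^ 2 + ‖y‖ ^ 4) := by linarith

lemma expect_norm_sum_pow_four_le (a : κ → H) (s : Finset κ) :
    𝔼 ω : κ → ℤˣ, ‖∑ k ∈ s, ω k • a k‖ ^ 4 ≤ 3 * (∑ k ∈ s, ‖a k‖ ^ 2) ^ 2 := by
  induction s using Finset.induction_on with
  | empty => simp
  | insert i s hi ih =>
    rw [expect_sum_insert_intUnits_smul (‖·‖ ^ 4) a hi, Finset.sum_insert hi]
    calc 𝔼 ω : κ → ℤˣ, (‖∑ k ∈ s, ω k • a k + ω i • a i‖ ^ 4 +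
            ‖∑ k ∈ s, ω k • a k - ω i • a i‖ ^ 4) / 2
        ≤ 𝔼 ω : κ → ℤˣ, (‖∑ k ∈ s, ω k • a k‖ ^ 4 +
            6 * ‖a i‖ ^ 2 * ‖∑ k ∈ s, ω k • a k‖ ^ 2 + ‖a i‖ ^ 4) := by
          gcongr with ω
          have h := norm_add_pow_four_add_norm_sub_pow_four_le (∑ k ∈ s, ω k • a k) (ω i • a i)
          rw [norm_intUnits_smul] at h
          linarith
      _ = 𝔼 ω : κ → ℤˣ, ‖∑ k ∈ s, ω k • a k‖ ^ 4 +
            6 * ‖a i‖ ^ 2 * ∑ k ∈ s, ‖a k‖ ^ 2 + ‖a i‖ ^ 4 := by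
          simp only [Finset.expect_add_distrib, ← Finset.mul_expect, Fintype.expect_const,
            expect_norm_sum_sq]
      _ ≤ 3 * (‖a i‖ ^ 2 + ∑ k ∈ s, ‖a k‖ ^ 2) ^ 2 := by
          nlinarith [sq_nonneg (‖a i‖ ^ 2)]

theorem sqrt_sum_norm_sq_le_expect_norm (a : κ → H) :
    √(∑ k, ‖a k‖ ^ 2) ≤ 2 * 𝔼 ω : κ → ℤˣ, ‖∑ k, ω k • a k‖ := by
  set σ := √(∑ k, ‖a k‖ ^ 2)
  have hσ2 : σ ^ 2 = ∑ k, ‖a k‖ ^ 2 := Real.sq_sqrt (by positivity)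
  have hσ0 : 0 ≤ σ := Real.sqrt_nonneg _
  rcases hσ0.eq_or_lt with h0 | hpos
  · rw [← h0]
    exact mul_nonneg zero_le_two (Finset.expect_nonneg fun _ _ => norm_nonneg _)
  have hpoint (t : ℝ) (ht : 0 ≤ t) : 12 * σ ^ 2 * t ^ 2 ≤ t ^ 4 + 16 * σ ^ 3 * t := by
    have : 0 ≤ t * (t - 2 * σ) ^ 2 * (t + 4 * σ) := by positivity
    linarith
  have hmean : 12 * σ ^ 2 * 𝔼 ω : κ → ℤˣ, ‖∑ k, ω k • a k‖ ^ 2 ≤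
      𝔼 ω : κ → ℤˣ, ‖∑ k, ω k • a k‖ ^ 4 + 16 * σ ^ 3 * 𝔼 ω : κ → ℤˣ, ‖∑ k, ω k • a k‖ := by
    rw [Finset.mul_expect, Finset.mul_expect, ← Finset.expect_add_distrib]
    exact Finset.expect_le_expect fun ω _ => hpoint _ (norm_nonneg _)
  have hfour := expect_norm_sum_pow_four_le a Finset.univ
  rw [expect_norm_sum_sq, ← hσ2] at hmean
  rw [← hσ2] at hfour
  have : σ ^ 3 * (9 * σ) ≤ σ ^ 3 * (16 * 𝔼 ω : κ → ℤˣ, ‖∑ k, ω k • a k‖) := by linarith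
  have := le_of_mul_le_mul_left this (by positivity)
  linarith

end Rademacher

section FamilyOfFunctionals

variable {𝕜 : Type*} [RCLike 𝕜] {E : Type*} [NormedAddCommGroup E] [NormedSpace 𝕜 E]
  {κ : Type*}

/-- The operator `z ↦ (f k z)_k` into Euclidean space built from a finite family of functionals
`f`; this is how Hilbert-space-valued operators enter the argument. -/
noncomputable def euclideanPi (f : κ → E →L[𝕜] 𝕜) : E →L[𝕜] EuclideanSpace 𝕜 κ :=
  (EuclideanSpace.equiv κ 𝕜).symm.toContinuousLinearMap ∘L ContinuousLinearMap.pi f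

lemma norm_euclideanPi_sq [Fintype κ] (f : κ → E →L[𝕜] 𝕜) (z : E) :
    ‖euclideanPi f z‖ ^ 2 = ∑ k, ‖f k z‖ ^ 2 :=
  EuclideanSpace.norm_sq_eq _

variable {Ω : Type*} [Fintype Ω]

/-- The operator `z ↦ (f ω z)_ω` into `L²` of the uniform probability measure on `Ω`. That space
is encoded as Euclidean space, whence the factor `|Ω|^(-1/2)`. -/
noncomputable def uniformL2Pi (f : Ω → E →L[𝕜] 𝕜) : E →L[𝕜] EuclideanSpace 𝕜 Ω :=
  (((√(Fintype.card Ω))⁻¹ : ℝ) : 𝕜) • euclideanPi f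

lemma norm_uniformL2Pi_sq (f : Ω → E →L[𝕜] 𝕜) (z : E) :
    ‖uniformL2Pi f z‖ ^ 2 = 𝔼 ω, ‖f ω z‖ ^ 2 := by
  rw [uniformL2Pi, smul_apply, norm_smul, mul_pow, RCLike.norm_ofReal, sq_abs, inv_pow,
    Real.sq_sqrt (Nat.cast_nonneg _), norm_euclideanPi_sq, Fintype.expect_eq_sum_div_card,
    inv_mul_eq_div]

lemma expect_norm_le_norm_uniformL2Pi [Nonempty Ω] (f : Ω → E →L[𝕜] 𝕜) (z : E) :
    𝔼 ω, ‖f ω z‖ ≤ ‖uniformL2Pi f z‖ := by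
  refine le_of_sq_le_sq ?_ (norm_nonneg _)
  rw [norm_uniformL2Pi_sq]
  simpa using Finset.expect_mul_sq_le_sq_mul_sq Finset.univ (fun ω => ‖f ω z‖) 1

end FamilyOfFunctionals

section EllOne

variable {𝕜 : Type*} [RCLike 𝕜] {ι : Type*} [DecidableEq ι]

lemma opNorm_le_of_norm_apply_single_le {F : Type*} [NormedAddCommGroup F] [NormedSpace 𝕜 F]
    (T : lp (fun _ : ι => 𝕜) 1 →L[𝕜] F) {M : ℝ} (hM : 0 ≤ M)
    (h : ∀ k, ‖T (lp.single 1 k 1)‖ ≤ M) : ‖T‖ ≤ M := by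
  refine T.opNorm_le_bound hM fun x => ?_
  have hTx := (lp.hasSum_single ENNReal.one_ne_top x).mapL T
  have hx := (lp.hasSum_norm (by simp) x).mul_left M
  simp only [ENNReal.toReal_one, Real.rpow_one] at hx
  refine hTx.norm_le_of_bounded hx fun k => ?_
  have hk : lp.single (E := fun _ : ι => 𝕜) 1 k (x k) =
      x k • lp.single (E := fun _ : ι => 𝕜) 1 k 1 := by
    rw [← lp.single_smul, smul_eq_mul, mul_one]
  rw [hk, map_smul, norm_smul, mul_comm]
  gcongr
  exact h k

lemma exists_dual_apply_single_eq (g : ι → 𝕜) {M : ℝ} (hM : 0 ≤ M) (hg : ∀ k, ‖g k‖ ≤ M) :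
    ∃ ψ : lp (fun _ : ι => 𝕜) 1 →L[𝕜] 𝕜, ‖ψ‖ ≤ M ∧ ∀ k, ψ (lp.single 1 k 1) = g k := by
  let G : lp (fun _ : ι => 𝕜) ∞ := ⟨g, memℓp_infty ⟨M, by rintro _ ⟨k, rfl⟩; exact hg k⟩⟩
  let ψ := lp.dualPairing ∞ 1 (fun _ : ι => ContinuousLinearMap.mul 𝕜 𝕜) (K := 1)
    (fun _ => ContinuousLinearMap.opNorm_mul_le 𝕜 𝕜) G
  have hψ (k : ι) : ψ (lp.single 1 k 1) = g k := by
    refine (lp.dualPairing_apply ..).trans ?_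
    rw [tsum_eq_single k fun i hi => by simp [hi]]
    simp [G]
  exact ⟨ψ, opNorm_le_of_norm_apply_single_le ψ hM fun k => (hψ k).symm ▸ hg k, hψ⟩

lemma exists_dual_norm_sub_apply_single_le (φ : lp (fun _ : ι => 𝕜) 1 →L[𝕜] 𝕜) {M : ℝ}
    (hM : 0 < M) :
    ∃ ψ : lp (fun _ : ι => 𝕜) 1 →L[𝕜] 𝕜, ‖ψ‖ ≤ M ∧
      ∀ k, ‖(φ - ψ) (lp.single 1 k 1)‖ ≤ ‖φ (lp.single 1 k 1)‖ ^ 2 / M := by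
  let g (k : ι) : 𝕜 := if ‖φ (lp.single 1 k 1)‖ ≤ M then φ (lp.single 1 k 1) else 0
  obtain ⟨ψ, hψM, hψ⟩ := exists_dual_apply_single_eq g hM.le fun k => by
    by_cases hk : ‖φ (lp.single 1 k 1)‖ ≤ M <;> simp [g, hk, hM.le]
  refine ⟨ψ, hψM, fun k => ?_⟩
  rw [sub_apply, hψ]
  by_cases hk : ‖φ (lp.single 1 k 1)‖ ≤ M
  · simp only [g, hk, if_true, sub_self, norm_zero]
    positivity
  · simp only [g, hk, if_false, sub_zero]
    rw [le_div_iff₀ hM, sq]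
    gcongr
    exact (not_le.1 hk).le

end EllOne

section Grothendieck

variable {𝕜 : Type*} [RCLike 𝕜] {E : Type*} [NormedAddCommGroup E] [NormedSpace 𝕜 E]

/-- A GT space (in Pisier's terminology) with constant `K`: every bounded operator from `E` into a
Hilbert space is absolutely `1`-summing with constant `K` times its norm. Only finitely many
vectors enter the inequality, so it is enough to test finite-dimensional Euclidean targets. -/
def IsGTSpaceWith (𝕜 : Type*) [RCLike 𝕜] (K : ℝ≥0) (E : Type*) [NormedAddCommGroup E]
    [NormedSpace 𝕜 E] : Prop :=
  ∀ (κ : Type) [Fintype κ] (T : E →L[𝕜] EuclideanSpace 𝕜 κ) (m : ℕ) (x : Fin m → E),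
    ∑ j, ‖T (x j)‖ ≤ K * ‖T‖ * weakNorm 𝕜 1 x

variable {κ : Type*} [Fintype κ]

/-- The Rademacher sum of the coordinate functionals of an operator into Euclidean space. -/
noncomputable def signedSum (T : E →L[𝕜] EuclideanSpace 𝕜 κ) (ω : κ → ℤˣ) : E →L[𝕜] 𝕜 :=
  ∑ k, ω k • (EuclideanSpace.proj k ∘L T)

lemma signedSum_apply (T : E →L[𝕜] EuclideanSpace 𝕜 κ) (ω : κ → ℤˣ) (z : E) :
    signedSum T ω z = ∑ k, ω k • T z k := by
  simp [signedSum, Units.smul_def]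

variable [DecidableEq κ]

lemma norm_apply_le_expect_norm_signedSum (T : E →L[𝕜] EuclideanSpace 𝕜 κ) (z : E) :
    ‖T z‖ ≤ 2 * 𝔼 ω, ‖signedSum T ω z‖ := by
  simp only [EuclideanSpace.norm_eq, signedSum_apply]
  exact sqrt_sum_norm_sq_le_expect_norm fun k => T z k

lemma expect_norm_signedSum_pow_four_le (T : E →L[𝕜] EuclideanSpace 𝕜 κ) (z : E) :
    𝔼 ω, ‖signedSum T ω z‖ ^ 4 ≤ 3 * ‖T z‖ ^ 4 := by
  rw [show ‖T z‖ ^ 4 = (‖T z‖ ^ 2) ^ 2 by ring, EuclideanSpace.norm_sq_eq]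
  simp only [signedSum_apply]
  exact expect_norm_sum_pow_four_le (fun k => T z k) Finset.univ

variable {ι : Type*}

-- At the truncation level `8` the remainder has mean square at most `3 / 8 ^ 2 ≤ (1 / 4) ^ 2`; any
-- bound below `1 / 2` would make the iteration below contract.
lemma exists_dual_expect_norm_signedSum_sub_sq_le [DecidableEq ι]
    (T : lp (fun _ : ι => 𝕜) 1 →L[𝕜] EuclideanSpace 𝕜 κ) (hT : ‖T‖ ≤ 1) :
    ∃ ψ : (κ → ℤˣ) → lp (fun _ : ι => 𝕜) 1 →L[𝕜] 𝕜, (∀ ω, ‖ψ ω‖ ≤ 8) ∧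
      ∀ k, 𝔼 ω, ‖(signedSum T ω - ψ ω) (lp.single 1 k 1)‖ ^ 2 ≤ (1 / 4) ^ 2 := by
  choose ψ hψ hsub using fun ω => exists_dual_norm_sub_apply_single_le (signedSum T ω)
    (show (0 : ℝ) < 8 by norm_num)
  refine ⟨ψ, hψ, fun k => ?_⟩
  set e : lp (fun _ : ι => 𝕜) 1 := lp.single 1 k 1
  have he : ‖T e‖ ≤ 1 := (T.le_of_opNorm_le hT e).trans (by simp [e, lp.norm_single])
  calc 𝔼 ω, ‖(signedSum T ω - ψ ω) e‖ ^ 2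
      ≤ 𝔼 ω, (‖signedSum T ω e‖ ^ 2 / 8) ^ 2 := by
        gcongr with ω
        exact hsub ω k
    _ = (𝔼 ω, ‖signedSum T ω e‖ ^ 4) / 64 := by
        rw [Finset.expect_div]
        exact Finset.expect_congr rfl fun ω _ => by ring
    _ ≤ 3 * ‖T e‖ ^ 4 / 64 := by
        gcongr
        exact expect_norm_signedSum_pow_four_le T e
    _ ≤ 3 * 1 ^ 4 / 64 := by gcongr
    _ ≤ (1 / 4) ^ 2 := by norm_num

lemma exists_norm_apply_le_expect_norm_add
    (T : lp (fun _ : ι => 𝕜) 1 →L[𝕜] EuclideanSpace 𝕜 κ) (hT : ‖T‖ ≤ 1) :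
    ∃ (ψ : (κ → ℤˣ) → lp (fun _ : ι => 𝕜) 1 →L[𝕜] 𝕜)
      (R : lp (fun _ : ι => 𝕜) 1 →L[𝕜] EuclideanSpace 𝕜 (κ → ℤˣ)),
      (∀ ω, ‖ψ ω‖ ≤ 8) ∧ ‖R‖ ≤ 1 / 4 ∧ ∀ z, ‖T z‖ ≤ 2 * 𝔼 ω, ‖ψ ω z‖ + 2 * ‖R z‖ := by
  classical
  obtain ⟨ψ, hψ, hsub⟩ := exists_dual_expect_norm_signedSum_sub_sq_le T hT
  refine ⟨ψ, uniformL2Pi fun ω => signedSum T ω - ψ ω, hψ,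
    opNorm_le_of_norm_apply_single_le _ (by norm_num) fun k => ?_, fun z => ?_⟩
  · refine le_of_sq_le_sq ?_ (by norm_num)
    rw [norm_uniformL2Pi_sq]
    exact hsub k
  · calc ‖T z‖ ≤ 2 * 𝔼 ω, ‖signedSum T ω z‖ := norm_apply_le_expect_norm_signedSum T z
      _ ≤ 2 * 𝔼 ω, (‖ψ ω z‖ + ‖(signedSum T ω - ψ ω) z‖) := by
          gcongr with ω
          rw [sub_apply]
          exact norm_le_norm_add_norm_sub' ..
      _ ≤ 2 * 𝔼 ω, ‖ψ ω z‖ + 2 * ‖uniformL2Pi (fun ω => signedSum T ω - ψ ω) z‖ := by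
          rw [Finset.expect_add_distrib, mul_add]
          gcongr
          exact expect_norm_le_norm_uniformL2Pi (fun ω => signedSum T ω - ψ ω) z

lemma sum_expect_norm_apply_le_weakNorm {Ω : Type*} [Fintype Ω] [Nonempty Ω]
    {ψ : Ω → E →L[𝕜] 𝕜} {M : ℝ} (hψ : ∀ ω, ‖ψ ω‖ ≤ M) {m : ℕ} (x : Fin m → E) :
    ∑ j, 𝔼 ω, ‖ψ ω (x j)‖ ≤ M * weakNorm 𝕜 1 x := by
  rw [← Finset.expect_sum_comm]
  refine Finset.expect_le Finset.univ_nonempty fun ω _ => ?_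
  exact (sum_norm_apply_le_weakNorm (ψ ω) x).trans
    (mul_le_mul_of_nonneg_right (hψ ω) (weakNorm_nonneg 1 x))

lemma sum_norm_apply_le_weakNorm_add {m : ℕ} (x : Fin m → lp (fun _ : ι => 𝕜) 1) (n : ℕ)
    (κ : Type) [Fintype κ] (T : lp (fun _ : ι => 𝕜) 1 →L[𝕜] EuclideanSpace 𝕜 κ)
    (hT : ‖T‖ ≤ 1) :
    ∑ j, ‖T (x j)‖ ≤ 32 * weakNorm 𝕜 1 x + (∑ j, ‖x j‖) * (1 / 2) ^ n := by
  classical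
  induction n generalizing κ with
  | zero =>
    have h : ∑ j, ‖T (x j)‖ ≤ ∑ j, ‖x j‖ := by
      gcongr with j
      exact (T.le_of_opNorm_le hT _).trans_eq (one_mul _)
    linarith [weakNorm_nonneg (𝕜 := 𝕜) 1 x]
  | succ n ih =>
    obtain ⟨ψ, R, hψ, hR, hTψR⟩ := exists_norm_apply_le_expect_norm_add T hT
    have hR' : ‖(4 : 𝕜) • R‖ ≤ 1 := by
      rw [norm_smul, RCLike.norm_ofNat]
      linarith
    have hRx : 4 * ∑ j, ‖R (x j)‖ ≤
        32 * weakNorm 𝕜 1 x + (∑ j, ‖x j‖) * (1 / 2) ^ n := by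
      simpa only [smul_apply, norm_smul, RCLike.norm_ofNat, ← Finset.mul_sum] using
        ih _ ((4 : 𝕜) • R) hR'
    calc ∑ j, ‖T (x j)‖
        ≤ ∑ j, (2 * 𝔼 ω, ‖ψ ω (x j)‖ + 2 * ‖R (x j)‖) := by
          gcongr with j
          exact hTψR (x j)
      _ = 2 * ∑ j, 𝔼 ω, ‖ψ ω (x j)‖ + 2 * ∑ j, ‖R (x j)‖ := by
          rw [Finset.sum_add_distrib, Finset.mul_sum, Finset.mul_sum]
      _ ≤ 2 * (8 * weakNorm 𝕜 1 x) + 2 * ∑ j, ‖R (x j)‖ := by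
          gcongr
          exact sum_expect_norm_apply_le_weakNorm hψ x
      _ ≤ 32 * weakNorm 𝕜 1 x + (∑ j, ‖x j‖) * (1 / 2) ^ (n + 1) := by
          rw [pow_succ]
          linarith

theorem isGTSpaceWith_lp_one (𝕜 : Type*) [RCLike 𝕜] (ι : Type*) :
    IsGTSpaceWith 𝕜 32 (lp (fun _ : ι => 𝕜) 1) := by
  intro κ _ T m x
  rcases eq_or_ne T 0 with rfl | hT
  · simp
  have hT' : 0 < ‖T‖ := norm_pos_iff.mpr hT
  have hnorm : ‖((‖T‖⁻¹ : ℝ) : 𝕜) • T‖ ≤ 1 := by simp [norm_smul, hT'.ne']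
  have hlim : Filter.Tendsto (fun n : ℕ => 32 * weakNorm 𝕜 1 x + (∑ j, ‖x j‖) * (1 / 2) ^ n)
      Filter.atTop (nhds (32 * weakNorm 𝕜 1 x + (∑ j, ‖x j‖) * 0)) :=
    ((tendsto_pow_atTop_nhds_zero_of_lt_one (by norm_num) (by norm_num)).const_mul _).const_add _
  have h := ge_of_tendsto' hlim fun n => sum_norm_apply_le_weakNorm_add x n κ _ hnorm
  simp only [smul_apply, norm_smul, RCLike.norm_ofReal, abs_inv, abs_norm, ← Finset.mul_sum,
    mul_zero, add_zero, inv_mul_le_iff₀ hT'] at h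
  refine h.trans_eq ?_
  push_cast
  ring

end Grothendieck

section Multilinear

variable {𝕜 : Type*} [RCLike 𝕜] {r : ℝ}

lemma IsGTSpaceWith.rpow_sum_norm_apply_le {E : Type*} [NormedAddCommGroup E] [NormedSpace 𝕜 E]
    {K : ℝ≥0} (hE : IsGTSpaceWith 𝕜 K E) (hr₁ : 1 ≤ r) (hr₂ : r ≤ 2) {m : ℕ}
    (f : Fin m → E →L[𝕜] 𝕜) {L : ℝ} (hL : 0 ≤ L)
    (hf : ∀ z, (∑ j, ‖f j z‖ ^ r) ^ (1 / r) ≤ L * ‖z‖) (x : Fin m → E) :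
    (∑ j, ‖f j (x j)‖ ^ r) ^ (1 / r) ≤ K * L * weakNorm 𝕜 r x := by
  have hr : 0 < r := one_pos.trans_le hr₁
  have hT : ‖euclideanPi f‖ ≤ L := by
    refine (euclideanPi f).opNorm_le_bound hL fun z => (hf z).trans' ?_
    calc ‖euclideanPi f z‖ = (∑ j, ‖f j z‖ ^ (2 : ℝ)) ^ (1 / (2 : ℝ)) := by
          simp only [Real.rpow_two, ← norm_euclideanPi_sq, ← Real.sqrt_eq_rpow,
            Real.sqrt_sq (norm_nonneg _)]
      _ ≤ (∑ j, ‖f j z‖ ^ r) ^ (1 / r) :=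
          rpow_sum_le_rpow_sum_of_exponent_le Finset.univ (fun _ _ => norm_nonneg _) hr hr₂
  have hfT (j : Fin m) : ‖f j (x j)‖ ≤ ‖euclideanPi f (x j)‖ :=
    PiLp.norm_apply_le (euclideanPi f (x j)) j
  calc (∑ j, ‖f j (x j)‖ ^ r) ^ (1 / r)
      ≤ (∑ j, ‖euclideanPi f (x j)‖ ^ r) ^ (1 / r) := by
        gcongr with j
        exact hfT j
    _ ≤ K * ‖euclideanPi f‖ * weakNorm 𝕜 r x :=
        rpow_sum_norm_apply_le_of_one_summing _ (by positivity) (hE (Fin m) _ m) hr₁ x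
    _ ≤ K * L * weakNorm 𝕜 r x := by
        gcongr
        exact weakNorm_nonneg r x

lemma rpow_sum_norm_multilinear_apply_le_of_fin_one {E : Fin 1 → Type*}
    [∀ i, NormedAddCommGroup (E i)] [∀ i, NormedSpace 𝕜 (E i)]
    (A : ContinuousMultilinearMap 𝕜 E 𝕜) (hr : 0 < r) {m : ℕ} (x : ∀ i, Fin m → E i) :
    (∑ j, ‖A fun i => x i j‖ ^ r) ^ (1 / r) ≤ ‖A‖ * weakNorm 𝕜 r (x 0) := by
  let φ : E 0 →L[𝕜] 𝕜 := A.toContinuousLinearMap 0 0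
  have hφ_apply (v : ∀ i, E i) : φ (v 0) = A v := by
    refine (A.toContinuousLinearMap_apply ..).trans (congrArg A (funext fun i => ?_))
    rw [Subsingleton.elim i 0, Function.update_self]
  have hφ : ‖φ‖ ≤ ‖A‖ := φ.opNorm_le_bound (norm_nonneg A) fun z => by
    have h := A.le_opNorm (Function.update 0 0 z)
    simpa [← hφ_apply] using h
  simp only [← hφ_apply]
  exact (rpow_sum_norm_apply_le_weakNorm hr φ (x 0)).trans
    (mul_le_mul_of_nonneg_right hφ (weakNorm_nonneg r _))

theorem rpow_sum_norm_multilinear_apply_le {n : ℕ} {E : Fin (n + 1) → Type*}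
    [∀ i, NormedAddCommGroup (E i)] [∀ i, NormedSpace 𝕜 (E i)] {K : Fin n → ℝ≥0}
    (hE : ∀ i : Fin n, IsGTSpaceWith 𝕜 (K i) (E i.castSucc))
    (A : ContinuousMultilinearMap 𝕜 E 𝕜) (hr₁ : 1 ≤ r) (hr₂ : r ≤ 2) {m : ℕ}
    (x : ∀ i, Fin m → E i) :
    (∑ j, ‖A fun i => x i j‖ ^ r) ^ (1 / r) ≤
      (∏ i, (K i : ℝ)) * ‖A‖ * ∏ i, weakNorm 𝕜 r (x i) := by
  have hr : 0 < r := one_pos.trans_le hr₁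
  induction n with
  | zero =>
    simpa using rpow_sum_norm_multilinear_apply_le_of_fin_one A hr x
  | succ n ih =>
    let f (j : Fin m) : E 0 →L[𝕜] 𝕜 :=
      (ContinuousMultilinearMap.apply 𝕜 (fun i : Fin (n + 1) => E i.succ) 𝕜
        fun i => x i.succ j) ∘L A.curryLeft
    have hf_apply (j : Fin m) (z : E 0) : f j z = A.curryLeft z fun i => x i.succ j := rfl
    have hf (z : E 0) : (∑ j, ‖f j z‖ ^ r) ^ (1 / r) ≤
        (∏ i : Fin n, (K i.succ : ℝ)) * ‖A‖ * (∏ i : Fin (n + 1), weakNorm 𝕜 r (x i.succ)) *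
          ‖z‖ := by
      have hz : ‖A.curryLeft z‖ ≤ ‖A‖ * ‖z‖ :=
        (A.curryLeft.le_opNorm z).trans_eq (by rw [A.curryLeft_norm])
      calc (∑ j, ‖f j z‖ ^ r) ^ (1 / r)
          ≤ (∏ i : Fin n, (K i.succ : ℝ)) * ‖A.curryLeft z‖ *
              ∏ i : Fin (n + 1), weakNorm 𝕜 r (x i.succ) :=
            ih (fun i => hE i.succ) (A.curryLeft z) fun i => x i.succ
        _ ≤ (∏ i : Fin n, (K i.succ : ℝ)) * (‖A‖ * ‖z‖) *
              ∏ i : Fin (n + 1), weakNorm 𝕜 r (x i.succ) := by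
            gcongr
            exact Finset.prod_nonneg fun i _ => weakNorm_nonneg r _
        _ = (∏ i : Fin n, (K i.succ : ℝ)) * ‖A‖ *
              (∏ i : Fin (n + 1), weakNorm 𝕜 r (x i.succ)) * ‖z‖ := by ring
    have hA (j : Fin m) : A (fun i => x i j) = f j (x 0 j) := by
      rw [hf_apply, A.curryLeft_apply]
      exact congrArg A (Fin.cons_self_tail fun i => x i j).symm
    have hE₀ : IsGTSpaceWith 𝕜 (K 0) (E 0) := hE 0
    simp only [hA]
    refine (hE₀.rpow_sum_norm_apply_le hr₁ hr₂ f ?_ hf (x 0)).trans_eq ?_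
    · exact mul_nonneg (by positivity) (Finset.prod_nonneg fun i _ => weakNorm_nonneg r _)
    · rw [Fin.prod_univ_succ fun i => (K i : ℝ), Fin.prod_univ_succ fun i => weakNorm 𝕜 r (x i)]
      ring

theorem ell1_ellp_summing_general {n : ℕ} {E : Fin (n + 1) → Type*}
    [∀ i, NormedAddCommGroup (E i)] [∀ i, NormedSpace 𝕜 (E i)]
    (hE : ∀ i : Fin n, ∃ K, IsGTSpaceWith 𝕜 K (E i.castSucc))
    (A : ContinuousMultilinearMap 𝕜 E 𝕜) (hr₁ : 1 ≤ r) (hr₂ : r ≤ 2) :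
    ∃ C > 0, ∀ (m : ℕ) (x : ∀ i, Fin m → E i),
      (∑ j, ‖A (fun i => x i j)‖ ^ r) ^ (1 / r) ≤ C * ∏ i, weakNorm 𝕜 r (x i) := by
  choose K hK using hE
  refine ⟨(∏ i, (K i : ℝ)) * ‖A‖ + 1, by positivity, fun m x => ?_⟩
  refine (rpow_sum_norm_multilinear_apply_le hK A hr₁ hr₂ x).trans ?_
  gcongr
  · exact Finset.prod_nonneg fun i _ => weakNorm_nonneg r _
  · exact le_add_of_nonneg_right zero_le_one

end Multilinear

lemma isGTSpaceWith_lp_of_eq_one (𝕜 : Type*) [RCLike 𝕜] (ι : Type*) {q : ℝ≥0∞} [Fact (1 ≤ q)]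
    (hq : q = 1) : IsGTSpaceWith 𝕜 32 (lp (fun _ : ι => 𝕜) q) := by
  subst hq
  exact isGTSpaceWith_lp_one 𝕜 ι

lemma two_pow_div_two_pow_sub_one_le_two {k : ℕ} (hk : k ≠ 0) :
    (2 : ℝ) ^ k / (2 ^ k - 1) ≤ 2 := by
  have h : (2 : ℝ) ≤ 2 ^ k := le_self_pow₀ one_le_two hk
  rw [div_le_iff₀ (by linarith)]
  linarith

/-- For `n ≥ 2` and `1 < p ≤ 2`, every continuous `n`-linear form on
`ℓ₁ × ⋯ × ℓ₁ × ℓ_p` (with `n − 1` factors `ℓ₁`) is absolutely `(r; r, …, r)`-summing for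
every `1 ≤ r ≤ 2^{n−1}/(2^{n−1} − 1)`. -/
theorem ell1_ellp_summing {𝕜 : Type*} [RCLike 𝕜] (n : ℕ) (hn : 2 ≤ n) (p : ℝ)
    (hp1 : 1 < p) (hp2 : p ≤ 2)
    [∀ i : Fin n, Fact (1 ≤ pexp n p i)]
    (A : ContinuousMultilinearMap 𝕜 (fun i : Fin n => lp (fun _ : ℕ => 𝕜) (pexp n p i)) 𝕜) :
    ∀ r : ℝ, 1 ≤ r → r ≤ 2 ^ (n - 1) / (2 ^ (n - 1) - 1) →
      ∃ C > 0, ∀ (m : ℕ) (x : ∀ i : Fin n, Fin m → lp (fun _ : ℕ => 𝕜) (pexp n p i)),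
        (∑ j, ‖A (fun i => x i j)‖ ^ r) ^ (1 / r) ≤ C * ∏ i, weakNorm 𝕜 r (x i) := by
  intro r hr₁ hr
  obtain ⟨k, rfl⟩ : ∃ k, n = k + 1 := ⟨n - 1, by omega⟩
  have hpexp (i : Fin k) : pexp (k + 1) p i.castSucc = 1 := if_pos (Nat.succ_lt_succ i.isLt)
  exact ell1_ellp_summing_general (fun i => ⟨32, isGTSpaceWith_lp_of_eq_one 𝕜 ℕ (hpexp i)⟩) A hr₁
    (hr.trans (two_pow_div_two_pow_sub_one_le_two (by omega)))
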